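/- Every metric triangle is 4-bi-Lipschitz embeddable in the Euclidean plane: if (Δ, d) is a metric triangle, then there exists a map F : Δ → ℂ such that (1/4)·d(x,y) ≤ |F(x) − F(y)| ≤ 4·d(x,y) for all x, y ∈ Δ. -/

import Mathlib

/-!
STATEMENT 0: Every metric triangle is 4-bi-Lipschitz embeddable in the Euclidean plane ℂ.

A metric triangle is a metric space consisting of three points (vertices) and three closed
arcs (edges), each isometric to a compact real interval, connecting the vertices pairwise;
edges are allowed to intersect at interior points.
-/

/-- A metric triangle: a metric space `Δ` with vertices `p, q, r` and three edges,
each parametrized isometrically by a compact interval `[0, Lᵢ]`, joining the vertices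
pairwise, whose union is all of `Δ`. -/
structure MetricTriangle (Δ : Type*) [MetricSpace Δ] where
  p : Δ
  q : Δ
  r : Δ
  L₁ : ℝ
  L₂ : ℝ
  L₃ : ℝ
  hL₁ : 0 ≤ L₁
  hL₂ : 0 ≤ L₂
  hL₃ : 0 ≤ L₃
  e₁ : ℝ → Δ
  e₂ : ℝ → Δ
  e₃ : ℝ → Δ
  iso₁ : ∀ s ∈ Set.Icc 0 L₁, ∀ t ∈ Set.Icc 0 L₁, dist (e₁ s) (e₁ t) = |s - t|
  iso₂ : ∀ s ∈ Set.Icc 0 L₂, ∀ t ∈ Set.Icc 0 L₂, dist (e₂ s) (e₂ t) = |s - t|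
  iso₃ : ∀ s ∈ Set.Icc 0 L₃, ∀ t ∈ Set.Icc 0 L₃, dist (e₃ s) (e₃ t) = |s - t|
  start₁ : e₁ 0 = p
  end₁ : e₁ L₁ = q
  start₂ : e₂ 0 = q
  end₂ : e₂ L₂ = r
  start₃ : e₃ 0 = r
  end₃ : e₃ L₃ = p
  cover : e₁ '' Set.Icc 0 L₁ ∪ e₂ '' Set.Icc 0 L₂ ∪ e₃ '' Set.Icc 0 L₃ = Set.univ

/-!
The three vertices determine a tripod whose endpoints have the same mutual distances, and each edge
of the triangle maps isometrically onto a path in this tripod. Placed in the plane with its legs in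
the directions of the cube roots of unity, the tripod is bi-Lipschitz embedded, but points of
different edges may get identified. To separate them, a point is pushed in the direction opposite
to the `i`-th leg by twice its distance to the union of the two edges ending at the `i`-th vertex,
so that each edge leaves the tripod on its own side.

For `x` and `y` on different edges, travelling from `x` to a nearby point on another edge than that
of `x`, from there along an edge, and on to `y` from a nearby point on another edge than that of
`y`, shows that `dist x y` exceeds the distance in the tripod at most by the two displacements.
Displacements and tripod coordinates add up without cancellation, so the plane map detects both.
-/

section HexagonalProjection

/-- The linear projection of `ℝ³` along the diagonal onto the plane, taking the standard basis to
the three cube roots of unity. -/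
noncomputable def hexProj : (Fin 3 → ℝ) →ₗ[ℝ] ℂ :=
  Fintype.linearCombination ℝ ![1, ⟨-1 / 2, √3 / 2⟩, ⟨-1 / 2, -√3 / 2⟩]

lemma norm_hexProj_sq (c : Fin 3 → ℝ) :
    ‖hexProj c‖ ^ 2 = ((c 0 - c 1) ^ 2 + (c 1 - c 2) ^ 2 + (c 2 - c 0) ^ 2) / 2 := by
  have sqrt_three : √3 ^ 2 = 3 := Real.sq_sqrt (by norm_num)
  rw [← Complex.normSq_eq_norm_sq, Complex.normSq_apply]
  simp only [hexProj, Fintype.linearCombination_apply, Fin.sum_univ_three, Matrix.cons_val,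
    Complex.add_re, Complex.add_im, Complex.real_smul, Complex.re_ofReal_mul,
    Complex.im_ofReal_mul, Complex.one_re, Complex.one_im]
  linear_combination (c 1 - c 2) ^ 2 / 4 * sqrt_three

lemma norm_hexProj_le (c : Fin 3 → ℝ) : ‖hexProj c‖ ≤ 2 * ‖c‖ := by
  rcases (norm_nonneg c).eq_or_lt with h | hpos
  · simp [norm_eq_zero.1 h.symm]
  have bound (i : Fin 3) : 0 ≤ ‖c‖ + c i ∧ 0 ≤ ‖c‖ - c i := by
    have := abs_le.1 (norm_le_pi_norm c i)
    constructor <;> linarith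
  have sum_sq_le : c 0 ^ 2 + c 1 ^ 2 + c 2 ^ 2 ≤ 3 * ‖c‖ ^ 2 := by
    linarith [mul_nonneg (bound 0).1 (bound 0).2, mul_nonneg (bound 1).1 (bound 1).2,
      mul_nonneg (bound 2).1 (bound 2).2]
  have neg_sum_mul_le : 0 ≤ ‖c‖ ^ 2 + (c 0 * c 1 + c 1 * c 2 + c 2 * c 0) := by
    refine nonneg_of_mul_nonneg_right ?_ hpos
    linarith [mul_nonneg (mul_nonneg (bound 0).1 (bound 1).1) (bound 2).1,
      mul_nonneg (mul_nonneg (bound 0).2 (bound 1).2) (bound 2).2]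
  refine le_of_sq_le_sq ?_ (by positivity)
  rw [norm_hexProj_sq]
  linarith

lemma sqrt_three_div_two_mul_abs_sub_le_norm_hexProj (c : Fin 3 → ℝ) (i j : Fin 3) :
    √3 / 2 * |c i - c j| ≤ ‖hexProj c‖ := by
  refine le_of_sq_le_sq ?_ (norm_nonneg _)
  rw [norm_hexProj_sq, mul_pow, div_pow, Real.sq_sqrt (by norm_num), sq_abs]
  fin_cases i <;> fin_cases j <;> dsimp only [Fin.zero_eta, Fin.mk_one, Fin.reduceFinMk] <;>
    linarith [sq_nonneg (c 0 + c 1 - 2 * c 2), sq_nonneg (c 1 + c 2 - 2 * c 0),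
      sq_nonneg (c 2 + c 0 - 2 * c 1), sq_nonneg (c 0 - c 1), sq_nonneg (c 1 - c 2),
      sq_nonneg (c 2 - c 0)]

end HexagonalProjection

lemma exists_sub_add_abs_le_two_mul_abs_sub {ι : Type*} (δ : ι → ℝ) {i k : ι} (j : ι)
    (hi : 0 ≤ δ i) (hk : δ k ≤ 0) : ∃ m n, δ i - δ k + |δ j| ≤ 2 * |δ m - δ n| := by
  have abs_le : |δ j| ≤ max |δ j - δ k| |δ i - δ j| := by
    rcases le_total 0 (δ j) with hj | hj
    · rw [abs_of_nonneg hj]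
      exact le_max_of_le_left ((by linarith : δ j ≤ δ j - δ k).trans (le_abs_self _))
    · rw [abs_of_nonpos hj]
      exact le_max_of_le_right ((by linarith : -δ j ≤ δ i - δ j).trans (le_abs_self _))
  have sub_le := le_abs_self (δ i - δ k)
  by_contra! hlt
  rcases le_max_iff.1 abs_le with h | h
  · linarith [hlt i k, hlt j k]
  · linarith [hlt i k, hlt i j]

/-- Points at distances `s` and `t` from the end of a leg of length `y` of a tripod, on the
geodesics from there to the two other ends, have the left side as their distance; the right side is
the `ℓ¹`-distance of their leg coordinates. -/
lemma tripod_dist_le_sum_abs_coord_sub (s t y : ℝ) :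
    max |s - t| (s + t - 2 * y) ≤
      max (s - y) 0 + max (t - y) 0 + |max (y - s) 0 - max (y - t) 0| := by
  have sub_max (a : ℝ) : max (a - y) 0 - max (y - a) 0 = a - y := by
    simpa [max_comm] using max_zero_sub_eq_self (a - y)
  have hs := sub_max s
  have ht := sub_max t
  have h₁ := le_abs_self (max (y - s) 0 - max (y - t) 0)
  have h₂ := neg_abs_le (max (y - s) 0 - max (y - t) 0)
  have hs₀ := le_max_right (s - y) 0
  have ht₀ := le_max_right (t - y) 0
  refine max_le (abs_sub_le_iff.2 ⟨?_, ?_⟩) ?_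
  · linarith
  · linarith
  · linarith [le_max_left (s - y) 0, le_max_left (t - y) 0,
      abs_nonneg (max (y - s) 0 - max (y - t) 0)]

section PseudoMetricSpace

variable {X : Type*} [PseudoMetricSpace X]

lemma le_infDist_add_infDist {A B : Set X} (hA : A.Nonempty) (hB : B.Nonempty) {x y : X} {c : ℝ}
    (h : ∀ a ∈ A, ∀ b ∈ B, c ≤ dist x a + dist y b) :
    c ≤ Metric.infDist x A + Metric.infDist y B := by
  have sub_dist_le (b : X) (hb : b ∈ B) : c - dist y b ≤ Metric.infDist x A :=
    (Metric.le_infDist hA).2 fun a ha => by linarith [h a ha b hb]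
  have : c - Metric.infDist x A ≤ Metric.infDist y B :=
    (Metric.le_infDist hB).2 fun b hb => by linarith [sub_dist_le b hb]
  linarith

/-- `E` lies isometrically on a geodesic from `p` to `q`: the points of `E` are metrically between
`p` and `q`, and their mutual distances can be read off from their distances to `p`. The set `E` may
be disconnected and need not contain `p` and `q`. -/
structure IsLinearBetween (p q : X) (E : Set X) : Prop where
  dist_add_dist : ∀ x ∈ E, dist x p + dist x q = dist p q
  dist_eq : ∀ x ∈ E, ∀ y ∈ E, dist x y = |dist x p - dist y p|

namespace IsLinearBetween

variable {p q r : X} {E : Set X}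

lemma symm (h : IsLinearBetween p q E) : IsLinearBetween q p E where
  dist_add_dist x hx := by rw [add_comm, h.dist_add_dist x hx, dist_comm]
  dist_eq x hx y hy := by
    rw [h.dist_eq x hx y hy, abs_sub_comm]
    congr 1
    linarith [h.dist_add_dist x hx, h.dist_add_dist y hy]

lemma image_Icc {L : ℝ} (hL : 0 ≤ L) {e : ℝ → X}
    (iso : ∀ s ∈ Set.Icc 0 L, ∀ t ∈ Set.Icc 0 L, dist (e s) (e t) = |s - t|) :
    IsLinearBetween (e 0) (e L) (e '' Set.Icc 0 L) := by
  have zero_mem : (0 : ℝ) ∈ Set.Icc 0 L := ⟨le_rfl, hL⟩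
  have L_mem : L ∈ Set.Icc 0 L := ⟨hL, le_rfl⟩
  have dist_zero (s : ℝ) (hs : s ∈ Set.Icc 0 L) : dist (e s) (e 0) = s := by
    rw [iso s hs 0 zero_mem, sub_zero, abs_of_nonneg hs.1]
  constructor
  · rintro _ ⟨s, hs, rfl⟩
    rw [dist_zero s hs, iso s hs L L_mem, dist_comm, dist_zero L L_mem,
      abs_of_nonpos (sub_nonpos.2 hs.2)]
    ring
  · rintro _ ⟨s, hs, rfl⟩ _ ⟨t, ht, rfl⟩
    rw [dist_zero s hs, dist_zero t ht, iso s hs t ht]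

lemma dist_le_abs_sub_add (h : IsLinearBetween p q E) (x : X) {y z : X} (hy : y ∈ E)
    (hz : z ∈ E) : dist x y ≤ |dist x p - dist y p| + 2 * dist x z :=
  calc dist x y ≤ dist x z + dist z y := dist_triangle x z y
    _ = dist x z + |dist z p - dist y p| := by rw [h.dist_eq z hz y hy]
    _ ≤ dist x z + (|dist z p - dist x p| + |dist x p - dist y p|) := by
      gcongr
      exact abs_sub_le _ _ _
    _ ≤ dist x z + (dist x z + |dist x p - dist y p|) := by
      gcongr
      rw [dist_comm x z]
      exact abs_dist_sub_le z x p
    _ = |dist x p - dist y p| + 2 * dist x z := by ring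

lemma dist_le_max_add (h : IsLinearBetween r p E) {x y z w : X}
    (hy : dist y q + dist y r = dist q r) (hz : z ∈ E) (hw : w ∈ E) :
    dist x y ≤ max (dist x q - dist y q) (dist r p - dist x p - dist y r) +
      2 * (dist x z + dist y w) := by
  have detour : dist x y ≤ dist x z + |dist z r - dist w r| + dist y w := by
    rw [← h.dist_eq z hz w hw, dist_comm y w]
    exact dist_triangle4 x z w y
  have hzrp := h.dist_add_dist z hz
  rcases abs_cases (dist z r - dist w r) with ⟨habs, -⟩ | ⟨habs, -⟩ <;> rw [habs] at detour
  · have hxzp := dist_triangle x z p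
    have hywr := dist_triangle y w r
    linarith [le_max_right (dist x q - dist y q) (dist r p - dist x p - dist y r)]
  · have hxzr := dist_triangle x z r
    have hqrx := dist_triangle_left q r x
    have hwry := dist_triangle_left w r y
    linarith [le_max_left (dist x q - dist y q) (dist r p - dist x p - dist y r)]

end IsLinearBetween

/-- A triangle with vertices `v i`, where `E i` is the edge opposite to `v i`. -/
def IsLinearTriangle (v : Fin 3 → X) (E : Fin 3 → Set X) : Prop :=
  ∀ ⦃i j k⦄, i ≠ j → j ≠ k → k ≠ i → IsLinearBetween (v i) (v j) (E k)

/-- The Gromov product, based at `v i`, of the other two vertices: the length of the `i`-th leg of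
the tripod whose endpoints have the same mutual distances as the vertices. -/
noncomputable def legLength (v : Fin 3 → X) (i : Fin 3) : ℝ :=
  (dist (v i) (v (i + 1)) + dist (v i) (v (i + 2)) - dist (v (i + 1)) (v (i + 2))) / 2

/-- The position, along the `i`-th leg and measured from the centre, of the image of `x` in the
comparison tripod; it is `0` if the image is not on that leg. -/
noncomputable def legCoord (v : Fin 3 → X) (i : Fin 3) (x : X) : ℝ :=
  max (legLength v i - dist x (v i)) 0

/-- Coordinates separating the points of the triangle: the tripod coordinates, corrected by the
distance to the other edges in order to separate edges which the tripod identifies. -/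
noncomputable def triangleCoord (v : Fin 3 → X) (E : Fin 3 → Set X) (x : X) (i : Fin 3) : ℝ :=
  legCoord v i x - 2 * Metric.infDist x (⋃ j ≠ i, E j)

variable {v : Fin 3 → X} {E : Fin 3 → Set X} {i j k : Fin 3} {x y : X}

lemma legLength_add_legLength (v : Fin 3 → X) (hij : i ≠ j) :
    legLength v i + legLength v j = dist (v i) (v j) := by
  fin_cases i <;> fin_cases j <;> first | exact absurd rfl hij | skip
  all_goals
    simp only [legLength, Fin.isValue, Fin.reduceFinMk, Fin.reduceAdd, Fin.zero_eta, Fin.mk_one,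
      zero_add, dist_comm (v 1) (v 0), dist_comm (v 2) (v 0), dist_comm (v 2) (v 1)]
    ring

lemma legCoord_nonneg (v : Fin 3 → X) (i : Fin 3) (x : X) : 0 ≤ legCoord v i x :=
  le_max_right _ _

lemma lipschitzWith_legCoord (v : Fin 3 → X) (i : Fin 3) : LipschitzWith 1 (legCoord v i) :=
  LipschitzWith.of_le_add fun x y => by
    have le_legCoord : legLength v i - dist y (v i) ≤ legCoord v i y := le_max_left _ _
    have legCoord_y_nonneg := legCoord_nonneg v i y
    exact max_le (by linarith [dist_triangle_left y (v i) x]) (by positivity)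

lemma lipschitzWith_triangleCoord (v : Fin 3 → X) (E : Fin 3 → Set X) :
    LipschitzWith 3 (triangleCoord v E) := by
  refine LipschitzWith.of_dist_le_mul fun x y => (dist_pi_le_iff (by positivity)).2 fun i => ?_
  suffices LipschitzWith 3 (triangleCoord v E · i) from this.dist_le_mul x y
  refine LipschitzWith.of_le_add_mul 3 fun x y => ?_
  have leg_le := (lipschitzWith_legCoord v i).le_add_mul x y
  have infDist_le := Metric.infDist_le_infDist_add_dist (s := ⋃ j ≠ i, E j) (x := y) (y := x)
  rw [dist_comm y x] at infDist_le
  simp only [triangleCoord, NNReal.coe_one, NNReal.coe_ofNat] at leg_le ⊢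
  linarith

lemma triangleCoord_of_mem (v : Fin 3 → X) (hij : i ≠ j) (hx : x ∈ E j) :
    triangleCoord v E x i = legCoord v i x := by
  have mem : x ∈ ⋃ m ≠ i, E m := Set.mem_biUnion hij.symm hx
  rw [triangleCoord, Metric.infDist_zero_of_mem mem, mul_zero, sub_zero]

namespace IsLinearTriangle

lemma legCoord_opposite (h : IsLinearTriangle v E) (hx : x ∈ E i) : legCoord v i x = 0 := by
  have hi₁ : i ≠ i + 1 := by simp
  have hi₂ : i ≠ i + 2 := by simp
  have h₁₂ : i + 1 ≠ i + 2 := by simp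
  have := (h h₁₂ hi₂.symm hi₁).dist_add_dist x hx
  have := dist_triangle_left (v i) (v (i + 1)) x
  have := dist_triangle_left (v i) (v (i + 2)) x
  exact max_eq_right (by rw [legLength]; linarith)

lemma legCoord_eq_max_dist_sub (h : IsLinearTriangle v E) (hij : i ≠ j) (hjk : j ≠ k)
    (hki : k ≠ i) (hx : x ∈ E k) :
    legCoord v i x = max (dist x (v j) - legLength v j) 0 := by
  rw [legCoord]
  congr 1
  linarith [(h hij hjk hki).dist_add_dist x hx, legLength_add_legLength v hij]

lemma legCoord_sub_legCoord (h : IsLinearTriangle v E) (hij : i ≠ j) (hjk : j ≠ k)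
    (hki : k ≠ i) (hx : x ∈ E k) :
    legCoord v i x - legCoord v j x = dist x (v j) - legLength v j := by
  rw [h.legCoord_eq_max_dist_sub hij hjk hki hx, legCoord]
  simpa only [neg_sub, max_comm 0] using max_zero_sub_eq_self (dist x (v j) - legLength v j)

lemma dist_eq_of_mem_same (h : IsLinearTriangle v E) (hij : i ≠ j) (hjk : j ≠ k) (hki : k ≠ i)
    (hx : x ∈ E k) (hy : y ∈ E k) :
    dist x y = |(triangleCoord v E x i - triangleCoord v E y i) -
      (triangleCoord v E x j - triangleCoord v E y j)| := by
  rw [(h hij hjk hki).symm.dist_eq x hx y hy, triangleCoord_of_mem v hki.symm hx,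
    triangleCoord_of_mem v hki.symm hy, triangleCoord_of_mem v hjk hx,
    triangleCoord_of_mem v hjk hy]
  congr 1
  linarith [h.legCoord_sub_legCoord hij hjk hki hx, h.legCoord_sub_legCoord hij hjk hki hy]

lemma dist_le_max_add_infDist (h : IsLinearTriangle v E) (hij : i ≠ j) (hjk : j ≠ k)
    (hki : k ≠ i) (hx : x ∈ E k) (hy : y ∈ E i) :
    dist x y ≤ max |dist x (v j) - dist y (v j)|
        (dist x (v j) + dist y (v j) - 2 * legLength v j) +
      2 * (Metric.infDist x (⋃ m ≠ k, E m) + Metric.infDist y (⋃ m ≠ i, E m)) := by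
  set T := max |dist x (v j) - dist y (v j)| (dist x (v j) + dist y (v j) - 2 * legLength v j)
  have abs_le_T : |dist x (v j) - dist y (v j)| ≤ T := le_max_left _ _
  suffices (dist x y - T) / 2 ≤
      Metric.infDist x (⋃ m ≠ k, E m) + Metric.infDist y (⋃ m ≠ i, E m) by linarith
  refine le_infDist_add_infDist ⟨y, Set.mem_biUnion hki.symm hy⟩ ⟨x, Set.mem_biUnion hki hx⟩
    fun a ha b hb => ?_
  suffices dist x y ≤ T + 2 * (dist x a + dist y b) by linarith
  obtain ⟨m, (hm : m ≠ k), ha⟩ := Set.mem_iUnion₂.1 ha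
  obtain ⟨n, (hn : n ≠ i), hb⟩ := Set.mem_iUnion₂.1 hb
  obtain rfl | rfl : m = i ∨ m = j := by omega
  · have := (h hjk hki hij).dist_le_abs_sub_add x hy ha
    linarith [dist_nonneg (x := y) (y := b)]
  obtain rfl | rfl : n = k ∨ n = m := by omega
  · have := (h hij hjk hki).symm.dist_le_abs_sub_add y hx hb
    rw [dist_comm y x, abs_sub_comm] at this
    linarith [dist_nonneg (x := x) (y := a)]
  · have hxE := (h hij hjk hki).dist_add_dist x hx
    have hyE := (h hjk hki hij).dist_add_dist y hy
    have through_third_edge := (h hki hij hjk).dist_le_max_add (x := x) hyE ha hb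
    refine through_third_edge.trans (add_le_add_left (max_le_max (le_abs_self _) ?_) _)
    linarith [legLength_add_legLength v hij, legLength_add_legLength v hjk,
      legLength_add_legLength v hki]

lemma exists_dist_le_of_mem_ne (h : IsLinearTriangle v E) (hij : i ≠ j) (hjk : j ≠ k)
    (hki : k ≠ i) (hx : x ∈ E k) (hy : y ∈ E i) :
    ∃ m n, dist x y ≤ 2 * |(triangleCoord v E x m - triangleCoord v E y m) -
      (triangleCoord v E x n - triangleCoord v E y n)| := by
  set δ : Fin 3 → ℝ := fun m => triangleCoord v E x m - triangleCoord v E y m with hδ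
  have δ_i : δ i = legCoord v i x + 2 * Metric.infDist y (⋃ m ≠ i, E m) := by
    simp only [hδ, triangleCoord_of_mem v hki.symm hx]
    rw [triangleCoord, h.legCoord_opposite hy]
    ring
  have δ_j : δ j = legCoord v j x - legCoord v j y := by
    simp only [hδ, triangleCoord_of_mem v hjk hx, triangleCoord_of_mem v hij.symm hy]
  have δ_k : δ k = -(legCoord v k y + 2 * Metric.infDist x (⋃ m ≠ k, E m)) := by
    simp only [hδ, triangleCoord_of_mem v hki hy]
    rw [triangleCoord, h.legCoord_opposite hx]
    ring
  have tripod_le : max |dist x (v j) - dist y (v j)|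
      (dist x (v j) + dist y (v j) - 2 * legLength v j) ≤
        legCoord v i x + legCoord v k y + |legCoord v j x - legCoord v j y| := by
    rw [h.legCoord_eq_max_dist_sub hij hjk hki hx,
      h.legCoord_eq_max_dist_sub hjk.symm hij.symm hki.symm hy]
    exact tripod_dist_le_sum_abs_coord_sub _ _ _
  have infDist_nonneg (m : Fin 3) (z : X) : 0 ≤ Metric.infDist z (⋃ n ≠ m, E n) :=
    Metric.infDist_nonneg
  obtain ⟨m, n, hmn⟩ := exists_sub_add_abs_le_two_mul_abs_sub δ (i := i) (k := k) j
    (by linarith [legCoord_nonneg v i x, infDist_nonneg i y])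
    (by linarith [legCoord_nonneg v k y, infDist_nonneg k x])
  rw [δ_i, δ_j, δ_k] at hmn
  exact ⟨m, n, by linarith [h.dist_le_max_add_infDist hij hjk hki hx hy]⟩

lemma exists_dist_le_two_mul_abs_sub (h : IsLinearTriangle v E) (hx : x ∈ ⋃ i, E i)
    (hy : y ∈ ⋃ i, E i) :
    ∃ i j, dist x y ≤ 2 * |(triangleCoord v E x i - triangleCoord v E y i) -
      (triangleCoord v E x j - triangleCoord v E y j)| := by
  obtain ⟨k, hx⟩ := Set.mem_iUnion.1 hx
  obtain ⟨i, hy⟩ := Set.mem_iUnion.1 hy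
  have exists_between : ∀ i k : Fin 3, ∃ j, i ≠ j ∧ j ≠ k := by decide
  obtain ⟨j, hij, hjk⟩ := exists_between i k
  rcases eq_or_ne k i with rfl | hki
  · obtain ⟨l, hkl, hlj⟩ := exists_between k j
    refine ⟨l, j, ?_⟩
    rw [← h.dist_eq_of_mem_same hlj hjk hkl hx hy]
    linarith [dist_nonneg (x := x) (y := y)]
  · exact h.exists_dist_le_of_mem_ne hij hjk hki hx hy

end IsLinearTriangle

/-- The bi-Lipschitz map of a triangle into the plane. The unscaled projection of the coordinates
has the constants `√3 / 4` and `6`; the factor `2 / 3` reduces the upper one to `4`. -/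
noncomputable def triangleMap (v : Fin 3 → X) (E : Fin 3 → Set X) (x : X) : ℂ :=
  hexProj ((2 / 3 : ℝ) • triangleCoord v E x)

lemma dist_triangleMap (v : Fin 3 → X) (E : Fin 3 → Set X) (x y : X) :
    dist (triangleMap v E x) (triangleMap v E y) =
      2 / 3 * ‖hexProj (triangleCoord v E x - triangleCoord v E y)‖ := by
  rw [dist_eq_norm, triangleMap, triangleMap, ← map_sub, ← smul_sub, map_smul, norm_smul,
    Real.norm_of_nonneg (by norm_num)]

lemma lipschitzWith_triangleMap (v : Fin 3 → X) (E : Fin 3 → Set X) :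
    LipschitzWith 4 (triangleMap v E) :=
  LipschitzWith.of_dist_le_mul fun x y =>
    calc dist (triangleMap v E x) (triangleMap v E y)
        = 2 / 3 * ‖hexProj (triangleCoord v E x - triangleCoord v E y)‖ := dist_triangleMap v E x y
      _ ≤ 2 / 3 * (2 * dist (triangleCoord v E x) (triangleCoord v E y)) := by
        rw [dist_eq_norm]
        gcongr
        exact norm_hexProj_le _
      _ ≤ 2 / 3 * (2 * (3 * dist x y)) := by
        gcongr
        exact (lipschitzWith_triangleCoord v E).dist_le_mul x y
      _ = 4 * dist x y := by ring

lemma IsLinearTriangle.le_dist_triangleMap (h : IsLinearTriangle v E) (hx : x ∈ ⋃ i, E i)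
    (hy : y ∈ ⋃ i, E i) :
    √3 / 6 * dist x y ≤ dist (triangleMap v E x) (triangleMap v E y) := by
  obtain ⟨i, j, hij⟩ := h.exists_dist_le_two_mul_abs_sub hx hy
  set δ := triangleCoord v E x - triangleCoord v E y
  calc √3 / 6 * dist x y ≤ √3 / 6 * (2 * |δ i - δ j|) := by gcongr; exact hij
    _ = 2 / 3 * (√3 / 2 * |δ i - δ j|) := by ring
    _ ≤ 2 / 3 * ‖hexProj δ‖ := by
      gcongr
      exact sqrt_three_div_two_mul_abs_sub_le_norm_hexProj δ i j
    _ = dist (triangleMap v E x) (triangleMap v E y) := (dist_triangleMap v E x y).symm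

end PseudoMetricSpace

namespace MetricTriangle

variable {Δ : Type*} [MetricSpace Δ] (T : MetricTriangle Δ)

/-- The vertices of a metric triangle, as a family. -/
def vertex : Fin 3 → Δ := ![T.p, T.q, T.r]

/-- The edges of a metric triangle, indexed by the opposite vertex. -/
def edge : Fin 3 → Set Δ :=
  ![T.e₂ '' Set.Icc 0 T.L₂, T.e₃ '' Set.Icc 0 T.L₃, T.e₁ '' Set.Icc 0 T.L₁]

lemma isLinearTriangle : IsLinearTriangle T.vertex T.edge := by
  have pq : IsLinearBetween T.p T.q (T.edge 2) := by
    rw [← T.start₁, ← T.end₁]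
    exact IsLinearBetween.image_Icc T.hL₁ T.iso₁
  have qr : IsLinearBetween T.q T.r (T.edge 0) := by
    rw [← T.start₂, ← T.end₂]
    exact IsLinearBetween.image_Icc T.hL₂ T.iso₂
  have rp : IsLinearBetween T.r T.p (T.edge 1) := by
    rw [← T.start₃, ← T.end₃]
    exact IsLinearBetween.image_Icc T.hL₃ T.iso₃
  intro i j k hij hjk hki
  fin_cases i <;> fin_cases j <;> fin_cases k <;> first
    | contradiction
    | exact pq
    | exact pq.symm
    | exact qr
    | exact qr.symm
    | exact rp
    | exact rp.symm

lemma mem_iUnion_edge (x : Δ) : x ∈ ⋃ i, T.edge i := by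
  have hx : x ∈ T.edge 2 ∪ T.edge 0 ∪ T.edge 1 := T.cover ▸ Set.mem_univ x
  rcases hx with (hx | hx) | hx <;> exact Set.mem_iUnion_of_mem _ hx

end MetricTriangle

theorem metricTriangle_biLipschitz_embeddable_general {X : Type*} [PseudoMetricSpace X]
    {v : Fin 3 → X} {E : Fin 3 → Set X} (h : IsLinearTriangle v E) :
    ∃ F : X → ℂ, LipschitzWith 4 F ∧
      ∀ x ∈ ⋃ i, E i, ∀ y ∈ ⋃ i, E i, √3 / 6 * dist x y ≤ dist (F x) (F y) :=
  ⟨triangleMap v E, lipschitzWith_triangleMap v E, fun _ hx _ hy => h.le_dist_triangleMap hx hy⟩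

/-- Every metric triangle is `4`-bi-Lipschitz embeddable in the Euclidean plane `ℂ`:
there is a map `F : Δ → ℂ` with `(1/4)·d(x,y) ≤ |F x - F y| ≤ 4·d(x,y)` for all `x, y`. -/
theorem metricTriangle_biLipschitz_embeddable {Δ : Type*} [MetricSpace Δ]
    (T : MetricTriangle Δ) :
    ∃ F : Δ → ℂ, ∀ x y : Δ,
      (1 / 4) * dist x y ≤ dist (F x) (F y) ∧ dist (F x) (F y) ≤ 4 * dist x y := by
  obtain ⟨F, lipschitz, le_dist⟩ :=
    metricTriangle_biLipschitz_embeddable_general T.isLinearTriangle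
  refine ⟨F, fun x y => ⟨?_, lipschitz.dist_le_mul x y⟩⟩
  have quarter_le : (1 / 4 : ℝ) ≤ √3 / 6 := by
    linarith [Real.le_sqrt_of_sq_le (by norm_num : (3 / 2 : ℝ) ^ 2 ≤ 3)]
  calc 1 / 4 * dist x y ≤ √3 / 6 * dist x y := by gcongr
    _ ≤ dist (F x) (F y) := le_dist x (T.mem_iUnion_edge x) y (T.mem_iUnion_edge y)
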